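/- arXiv:2006.16619 — 2 statements merged into one kernel-verified Lean document; each statement's English description precedes it below -/
import Mathlib

section
/- (Hua–Lin classification of CD-Ricci-flat graphs of girth at least 5.) Let G = (V,E) be a finite connected simple graph of girth at least 5 (with all vertex degrees positive where the Laplacian is used). Then G satisfies CD(∞,0), i.e. Γ₂(f,f)(x) ≥ 0 for all functions f : V → ℝ and all vertices x, if and only if G is isomorphic to one of: the path graph P_k on k ≥ 1 vertices; the cycle graph C_n with n ≥ 5; the star graph Star_n with n ≥ 3 leaves (one central vertex joined to n leaves); or one of the three extended star graphs Star₃^{1,2,3}, namely the trees having exactly one vertex of degree 3 from which emanate three paths of lengths (1,1,2), (1,2,2), and (2,2,2) respectively. -/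
open Finset

variable {V : Type*} [Fintype V] [DecidableEq V]

/-- The (Lin–Yau convention) graph Laplacian operator on functions:
`(Δf)(x) = (1/d(x)) ∑_{y ~ x} (f y − f x)`. -/
noncomputable def SimpleGraph.lapOp (G : SimpleGraph V) [DecidableRel G.Adj]
    (f : V → ℝ) : V → ℝ :=
  fun x => (∑ y ∈ G.neighborFinset x, (f y - f x)) / (G.degree x : ℝ)

/-- The bilinear form `Γ(f,g) = ½( Δ(fg) − f·Δg − g·Δf )`. -/
noncomputable def SimpleGraph.gammaOp (G : SimpleGraph V) [DecidableRel G.Adj]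
    (f g : V → ℝ) : V → ℝ :=
  fun x => (G.lapOp (f * g) x - f x * G.lapOp g x - g x * G.lapOp f x) / 2

/-- The iterated form `Γ₂(f,g) = ½( ΔΓ(f,g) − Γ(f,Δg) − Γ(g,Δf) )`. -/
noncomputable def SimpleGraph.gamma2Op (G : SimpleGraph V) [DecidableRel G.Adj]
    (f g : V → ℝ) : V → ℝ :=
  fun x => (G.lapOp (G.gammaOp f g) x - G.gammaOp f (G.lapOp g) x
      - G.gammaOp g (G.lapOp f) x) / 2

/-- The "extended star" (spider) tree with one centre vertex and three pendant paths,
of lengths `l 0`, `l 1`, `l 2`.  The centre is `none`; the vertex `some ⟨i, j⟩` is the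
`(j+1)`-st vertex along the `i`-th arm. -/
def spiderGraph (l : Fin 3 → ℕ) : SimpleGraph (Option (Σ i : Fin 3, Fin (l i))) :=
  SimpleGraph.fromRel fun x y =>
    (x = none ∧ ∃ (i : Fin 3) (h : 0 < l i), y = some ⟨i, ⟨0, h⟩⟩) ∨
    (∃ (i : Fin 3) (j : ℕ) (h1 : j < l i) (h2 : j + 1 < l i),
      x = some ⟨i, ⟨j, h1⟩⟩ ∧ y = some ⟨i, ⟨j + 1, h2⟩⟩)


lemma hl_tri (G : SimpleGraph V) (hg : 5 ≤ G.egirth) {a b c : V}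
    (h1 : G.Adj a b) (h2 : G.Adj b c) (h3 : G.Adj c a) : False := by
  have := SimpleGraph.le_egirth.1 hg a (.cons h1 (.cons h2 (.cons h3 .nil))) (by
    have := h1.ne; have := h2.ne; have := h3.ne
    simp [SimpleGraph.Walk.isCycle_def, SimpleGraph.Walk.isTrail_def]
    grind)
  simp at this
  exact absurd this (by decide)

lemma hl_quad (G : SimpleGraph V) (hg : 5 ≤ G.egirth) {a b c d : V} (hac : a ≠ c)
    (h1 : G.Adj a b) (h2 : G.Adj b c) (h3 : G.Adj a d) (h4 : G.Adj d c) : b = d := by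
  by_contra hbd
  have := SimpleGraph.le_egirth.1 hg a (.cons h1 (.cons h2 (.cons h4.symm (.cons h3.symm .nil)))) (by
    have := h1.ne; have := h2.ne; have := h3.ne; have := h4.ne
    simp [SimpleGraph.Walk.isCycle_def, SimpleGraph.Walk.isTrail_def]
    grind)
  simp at this
  exact absurd this (by decide)

lemma hl_gamma (G : SimpleGraph V) [DecidableRel G.Adj] (hdeg : ∀ v, 0 < G.degree v)
    (f g : V → ℝ) (x : V) : G.gammaOp f g x =
      (∑ y ∈ G.neighborFinset x, (f y - f x) * (g y - g x)) / (2 * (G.degree x : ℝ)) := by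
  have hd : (G.degree x : ℝ) ≠ 0 := by have := hdeg x; positivity
  unfold SimpleGraph.gammaOp SimpleGraph.lapOp
  rw [show ∑ y ∈ G.neighborFinset x, (f y - f x) * (g y - g x) =
    ∑ y ∈ G.neighborFinset x, ((f * g) y - (f * g) x) - f x * ∑ y ∈ G.neighborFinset x, (g y - g x)
     - g x * ∑ y ∈ G.neighborFinset x, (f y - f x) from ?_]
  · field_simp
  · rw [Finset.mul_sum, Finset.mul_sum, ← Finset.sum_sub_distrib, ← Finset.sum_sub_distrib]
    refine Finset.sum_congr rfl fun y _ => ?_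
    simp only [Pi.mul_apply]; ring

lemma hl_gamma2 (G : SimpleGraph V) [DecidableRel G.Adj] (hdeg : ∀ v, 0 < G.degree v)
    (f : V → ℝ) (x : V) : 2 * (G.degree x : ℝ) * G.gamma2Op f f x =
      ∑ y ∈ G.neighborFinset x, ((∑ z ∈ G.neighborFinset y, (f z - 2 * f y + f x) ^ 2)
          / (2 * (G.degree y : ℝ)) - (f y - f x) ^ 2)
        + (∑ y ∈ G.neighborFinset x, (f y - f x)) ^ 2 / (G.degree x : ℝ) := by
  have hd : ∀ x, (G.degree x : ℝ) ≠ 0 := fun x => by have := hdeg x; positivity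
  have key : ∀ y, (∑ z ∈ G.neighborFinset y, (f z - 2 * f y + f x) ^ 2)
          / (2 * (G.degree y : ℝ)) - (f y - f x) ^ 2
      = (G.gammaOp f f y - (f y - f x) * G.lapOp f y) - (f y - f x) ^ 2 / 2 := by
    intro y
    rw [hl_gamma G hdeg]
    unfold SimpleGraph.lapOp
    have : ∑ z ∈ G.neighborFinset y, (f z - 2 * f y + f x) ^ 2 =
      ∑ z ∈ G.neighborFinset y, (f z - f y) * (f z - f y)
      - 2 * (f y - f x) * ∑ z ∈ G.neighborFinset y, (f z - f y) + G.degree y * (f y - f x) ^ 2 := by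
      rw [Finset.mul_sum, ← Finset.sum_sub_distrib, ← SimpleGraph.card_neighborFinset_eq_degree,
        ← nsmul_eq_mul, ← Finset.sum_const, ← Finset.sum_add_distrib]
      refine Finset.sum_congr rfl fun y _ => ?_
      ring
    rw [this]
    have := hd y
    field_simp
    ring
  rw [Finset.sum_congr rfl fun y _ => key y]
  unfold SimpleGraph.gamma2Op
  rw [hl_gamma G hdeg f (G.lapOp f)]
  rw [show G.lapOp (G.gammaOp f f) x = (∑ y ∈ G.neighborFinset x,
    (G.gammaOp f f y - G.gammaOp f f x)) / (G.degree x : ℝ) from rfl]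
  have e1 : ∑ y ∈ G.neighborFinset x, (f y - f x) = G.degree x * G.lapOp f x := by
    unfold SimpleGraph.lapOp; have := hd x; field_simp
  have e2 : ∑ y ∈ G.neighborFinset x, (f y - f x) ^ 2 = 2 * G.degree x * G.gammaOp f f x := by
    rw [hl_gamma G hdeg]; have := hd x; field_simp
  have e3 : ∑ y ∈ G.neighborFinset x, (f y - f x) * (G.lapOp f y - G.lapOp f x) =
      ∑ y ∈ G.neighborFinset x, (f y - f x) * G.lapOp f y - G.degree x * G.lapOp f x ^ 2 := by
    rw [pow_two, ← mul_assoc, ← e1, Finset.sum_mul, ← Finset.sum_sub_distrib]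
    exact Finset.sum_congr rfl fun y _ => by ring
  rw [e3, Finset.sum_sub_distrib, Finset.sum_sub_distrib, Finset.sum_sub_distrib,
    ← Finset.sum_div, e2, e1, Finset.sum_const, SimpleGraph.card_neighborFinset_eq_degree,
    nsmul_eq_mul]
  have := hd x
  field_simp
  ring

/-- The local quadratic form criterion. -/
lemma hl_quadform (G : SimpleGraph V) [DecidableRel G.Adj] (hdeg : ∀ v, 0 < G.degree v)
    (hg : 5 ≤ G.egirth) (x : V) :
    (∀ f, 0 ≤ G.gamma2Op f f x) ↔ ∀ a : V → ℝ,
      0 ≤ ∑ y ∈ G.neighborFinset x, (2 / (G.degree y : ℝ) - 1) * a y ^ 2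
        + (∑ y ∈ G.neighborFinset x, a y) ^ 2 / (G.degree x : ℝ) := by
  have hd : ∀ x, 0 < (G.degree x : ℝ) := fun x => by have := hdeg x; positivity
  constructor
  · intro h a
    set f : V → ℝ := fun z => if z = x then 0 else if G.Adj x z then a z else
      ∑ y ∈ G.neighborFinset x with G.Adj y z, 2 * a y with hf
    have fx : f x = 0 := by simp [hf]
    have fy : ∀ y ∈ G.neighborFinset x, f y = a y := by
      intro y hy
      have hy' : G.Adj x y := by simpa using hy
      simp [hf, hy', hy'.ne']
    have h1 := hl_gamma2 G hdeg f x
    have h2 : 0 ≤ 2 * (G.degree x : ℝ) * G.gamma2Op f f x := by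
      have := h f; have := hd x; positivity
    rw [h1] at h2
    refine h2.trans_eq ?_
    congr 1
    · refine Finset.sum_congr rfl fun y hy => ?_
      have hy' : G.Adj x y := by simpa using hy
      rw [fy y hy, fx]
      have : ∑ z ∈ G.neighborFinset y, (f z - 2 * a y + 0) ^ 2 = 4 * a y ^ 2 := by
        rw [Finset.sum_eq_single x]
        · rw [fx]; ring
        · intro z hz hzx
          have hz' : G.Adj y z := by simpa using hz
          have hxz : ¬ G.Adj x z := fun h => hl_tri G hg hy' hz' h.symm
          have : f z = 2 * a y := by
            simp only [hf, hzx, hxz, if_false]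
            rw [Finset.sum_eq_single y]
            · intro b hb hby
              simp at hb
              exact absurd (hl_quad G hg (Ne.symm hzx) hb.1 hb.2 hy' hz') hby
            · intro h; simp [hy', hz'] at h
          rw [this]; ring
        · intro h; simp [hy'.symm] at h
      rw [this]
      have := hd y
      field_simp
      ring
    · congr 2
      exact Finset.sum_congr rfl fun y hy => by rw [fy y hy, fx, sub_zero]
  · intro h f
    have h1 := hl_gamma2 G hdeg f x
    have h2 := h fun y => f y - f x
    have h3 : 0 ≤ 2 * (G.degree x : ℝ) * G.gamma2Op f f x := by
      rw [h1]
      refine h2.trans (add_le_add_left (Finset.sum_le_sum fun y hy => ?_) _)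
      have hy' : G.Adj x y := by simpa using hy
      have : 4 * (f y - f x) ^ 2 ≤ ∑ z ∈ G.neighborFinset y, (f z - 2 * f y + f x) ^ 2 := by
        refine le_trans (le_of_eq ?_) (Finset.single_le_sum
          (f := fun z => (f z - 2 * f y + f x) ^ 2) (fun z _ => sq_nonneg _)
          (show x ∈ G.neighborFinset y by simpa using hy'.symm))
        ring
      have h5 := div_le_div_of_nonneg_right this (show 0 ≤ 2 * (G.degree y : ℝ) by have := hd y; positivity)
      refine le_trans (le_of_eq ?_) (sub_le_sub_right h5 _)
      have := hd y
      field_simp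
      ring
    have := hd x
    by_contra hc
    push Not at hc
    nlinarith

/-- The combinatorial criterion. -/
def HLP (G : SimpleGraph V) [DecidableRel G.Adj] : Prop :=
  ∀ x y, G.Adj x y → 3 ≤ G.degree y → 2 ≤ G.degree x →
    G.degree x = 2 ∧ G.degree y = 3 ∧ ∀ z, G.Adj x z → z ≠ y → G.degree z = 1

lemma hl_P_of (G : SimpleGraph V) [DecidableRel G.Adj] (hdeg : ∀ v, 0 < G.degree v)
    (h : ∀ x, ∀ a : V → ℝ,
      0 ≤ ∑ y ∈ G.neighborFinset x, (2 / (G.degree y : ℝ) - 1) * a y ^ 2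
        + (∑ y ∈ G.neighborFinset x, a y) ^ 2 / (G.degree x : ℝ)) : HLP G := by
  intro x y hxy hy hx
  have hym : y ∈ G.neighborFinset x := by simpa using hxy
  have hy3 : (3 : ℝ) ≤ G.degree y := by exact_mod_cast hy
  have hx2 : (2 : ℝ) ≤ G.degree x := by exact_mod_cast hx
  have h1 : ∀ z, G.Adj x z → z ≠ y → G.degree z = 1 := by
    intro z hz hzy
    have hzm : z ∈ G.neighborFinset x := by simpa using hz
    have := h x (fun v => if v = y then 1 else if v = z then -1 else 0)
    have e : ∑ v ∈ G.neighborFinset x, (if v = y then (1:ℝ) else if v = z then -1 else 0) = 0 := by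
      rw [← Finset.sum_subset (s₁ := {y, z})]
      · rw [Finset.sum_pair hzy.symm]; simp [hzy]
      · intro v hv; simp at hv; rcases hv with rfl | rfl <;> assumption
      · intro v _ hv; simp at hv; simp [hv]
    have e2 : ∑ v ∈ G.neighborFinset x, (2 / (G.degree v : ℝ) - 1) *
        (if v = y then (1:ℝ) else if v = z then -1 else 0) ^ 2
        = (2 / (G.degree y : ℝ) - 1) + (2 / (G.degree z : ℝ) - 1) := by
      rw [← Finset.sum_subset (s₁ := {y, z})]
      · rw [Finset.sum_pair hzy.symm]; simp [hzy]
      · intro v hv; simp at hv; rcases hv with rfl | rfl <;> assumption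
      · intro v _ hv; simp at hv; simp [hv]
    rw [e, e2] at this
    by_contra hne
    have hz2 : (2 : ℝ) ≤ G.degree z := by
      have := hdeg z; exact_mod_cast (by omega : 2 ≤ G.degree z)
    have i1 : 2 / (G.degree y : ℝ) ≤ 2 / 3 := by gcongr
    have i2 : 2 / (G.degree z : ℝ) ≤ 2 / 2 := by gcongr
    norm_num at this i2
    linarith
  have h2 := h x (fun v => if v = y then 2 * (G.degree x : ℝ) - 1 else -1)
  have hc : ((G.neighborFinset x).erase y).card = G.degree x - 1 := by
    rw [Finset.card_erase_of_mem hym, SimpleGraph.card_neighborFinset_eq_degree]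
  have hc' : (((G.neighborFinset x).erase y).card : ℝ) = G.degree x - 1 := by
    rw [hc, Nat.cast_sub (by omega)]; simp
  rw [← Finset.add_sum_erase _ _ hym, ← Finset.add_sum_erase _ _ hym] at h2
  have s1 : ∑ v ∈ (G.neighborFinset x).erase y, (2 / (G.degree v : ℝ) - 1) *
      (if v = y then 2 * (G.degree x : ℝ) - 1 else -1) ^ 2
      = ∑ v ∈ (G.neighborFinset x).erase y, (1 : ℝ) := by
    refine Finset.sum_congr rfl fun v hv => ?_
    simp at hv
    rw [h1 v hv.2 hv.1]; simp [hv]; norm_num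
  have s2 : ∑ v ∈ (G.neighborFinset x).erase y, (if v = y then 2 * (G.degree x : ℝ) - 1 else -1)
      = ∑ v ∈ (G.neighborFinset x).erase y, (-1 : ℝ) := by
    refine Finset.sum_congr rfl fun v hv => ?_
    simp at hv
    simp [hv]
  rw [s1, s2] at h2
  simp only [if_true, Finset.sum_const, nsmul_eq_mul, hc'] at h2
  set D := (G.degree x : ℝ)
  set E := (G.degree y : ℝ)
  have h3 : 0 ≤ (2 / E - 1) * (2 * D - 1) + 1 := by
    have hp : 0 < 2 * D - 1 := by linarith
    by_contra hcon
    push Not at hcon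
    have : (2 / E - 1) * (2 * D - 1) ^ 2 + (D - 1) * 1 + (2 * D - 1 + (D - 1) * -1) ^ 2 / D
        = ((2 / E - 1) * (2 * D - 1) + 1) * (2 * D - 1) := by field_simp; ring
    nlinarith
  have h4 : 0 ≤ (2 - E) * (2 * D - 1) + E := by
    have : (2 - E) * (2 * D - 1) + E = E * ((2 / E - 1) * (2 * D - 1) + 1) := by
      field_simp
    rw [this]; positivity
  have hD : D < 3 := by
    by_contra hcon
    push Not at hcon
    nlinarith
  have hD2 : G.degree x = 2 := by
    have : G.degree x < 3 := Nat.cast_lt (α := ℝ).1 (by simpa [D] using hD)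
    omega
  have hD3 : D = 2 := by simp [D, hD2]
  rw [hD3] at h4
  have : E ≤ 3 := by linarith
  have : G.degree y ≤ 3 := Nat.cast_le (α := ℝ).1 (by simpa [E] using this)
  exact ⟨hD2, by omega, h1⟩

lemma hl_of_P (G : SimpleGraph V) [DecidableRel G.Adj] (hdeg : ∀ v, 0 < G.degree v)
    (h : HLP G) (x : V) (a : V → ℝ) :
      0 ≤ ∑ y ∈ G.neighborFinset x, (2 / (G.degree y : ℝ) - 1) * a y ^ 2
        + (∑ y ∈ G.neighborFinset x, a y) ^ 2 / (G.degree x : ℝ) := by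
  by_cases hall : ∀ y, G.Adj x y → G.degree y ≤ 2
  · refine add_nonneg (Finset.sum_nonneg fun y hy => mul_nonneg ?_ (sq_nonneg _)) (by positivity)
    have h1 : (G.degree y : ℝ) ≤ 2 := by exact_mod_cast hall y (by simpa using hy)
    have h2 : 0 < (G.degree y : ℝ) := by exact_mod_cast hdeg y
    rw [sub_nonneg, le_div_iff₀ h2]; linarith
  push Not at hall
  obtain ⟨y, hxy, hy⟩ := hall
  have hym : y ∈ G.neighborFinset x := by simpa using hxy
  have h2 : 0 < (G.degree y : ℝ) := by exact_mod_cast hdeg y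
  by_cases hx : G.degree x = 1
  · obtain ⟨w, hw⟩ := Finset.card_eq_one.1 ((G.card_neighborFinset_eq_degree x).trans hx)
    rw [hw] at hym ⊢
    simp at hym
    subst hym
    simp [hx]
    have : (2 / (G.degree y : ℝ) - 1) * a y ^ 2 + a y ^ 2 = 2 / (G.degree y : ℝ) * a y ^ 2 := by ring
    rw [this]; positivity
  · obtain ⟨h1, h3, h4⟩ := h x y hxy (by omega) (by have := hdeg x; omega)
    obtain ⟨z, hz⟩ : ∃ z, (G.neighborFinset x).erase y = {z} := by
      apply Finset.card_eq_one.1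
      rw [Finset.card_erase_of_mem hym, SimpleGraph.card_neighborFinset_eq_degree, h1]
    have hzm : z ∈ (G.neighborFinset x).erase y := by simp [hz]
    simp at hzm
    rw [← Finset.add_sum_erase _ _ hym, ← Finset.add_sum_erase _ _ hym, hz]
    simp only [Finset.sum_singleton, h1, h3, h4 z hzm.2 hzm.1]
    push_cast
    nlinarith [sq_nonneg (a y + 3 * a z)]

lemma hl_iso {W : Type*} [Nonempty W] (G : SimpleGraph V) (hconn : G.Connected)
    (H : SimpleGraph W) (φ : W → V) (hinj : Function.Injective φ)
    (h1 : ∀ u v, H.Adj u v → G.Adj (φ u) (φ v))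
    (h2 : ∀ u w, G.Adj (φ u) w → ∃ v, H.Adj u v ∧ φ v = w) : Nonempty (G ≃g H) := by
  have hsurj : Function.Surjective φ := by
    intro w
    obtain ⟨u0⟩ := ‹Nonempty W›
    obtain ⟨p⟩ := hconn.preconnected (φ u0) w
    have : ∀ {a b : V} (p : G.Walk a b), (∃ u, φ u = a) → ∃ u, φ u = b := by
      intro a b p
      induction p with
      | nil => exact id
      | cons h p ih =>
        rintro ⟨u, rfl⟩
        obtain ⟨v, _, hv⟩ := h2 u _ h
        exact ih ⟨v, hv⟩
    exact this p ⟨u0, rfl⟩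
  have hbij : Function.Bijective φ := ⟨hinj, hsurj⟩
  refine ⟨SimpleGraph.Iso.symm ⟨Equiv.ofBijective φ hbij, ?_⟩⟩
  intro a b
  change G.Adj (φ a) (φ b) ↔ H.Adj a b
  constructor
  · intro h
    obtain ⟨v, hv, hv'⟩ := h2 a _ h
    rwa [← hinj hv']
  · exact h1 a b

/-- `p` restricted to `0..n` is a path in `G`. -/
def HLPath (G : SimpleGraph V) (n : ℕ) (p : ℕ → V) : Prop :=
  (∀ i j, i ≤ n → j ≤ n → p i = p j → i = j) ∧ ∀ i, i < n → G.Adj (p i) (p (i + 1))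

lemma hl_path_rev (G : SimpleGraph V) {n : ℕ} {p : ℕ → V} (h : HLPath G n p) :
    HLPath G n (fun i => p (n - i)) := by
  refine ⟨fun i j hi hj hij => ?_, fun i hi => ?_⟩
  · have := h.1 _ _ (by omega) (by omega) hij; omega
  · have := h.2 (n - (i + 1)) (by omega)
    rw [show n - (i + 1) + 1 = n - i by omega] at this
    exact this.symm

lemma hl_path_ext (G : SimpleGraph V) {n : ℕ} {p : ℕ → V} (h : HLPath G n p)
    (hmax : ∀ q, ¬ HLPath G (n + 1) q) {w : V} (hw : G.Adj (p 0) w) : ∃ j, j ≤ n ∧ p j = w := by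
  by_contra hc
  push Not at hc
  refine hmax (fun i => if i = 0 then w else p (i - 1)) ⟨fun i j hi hj hij => ?_, fun i hi => ?_⟩
  · rcases i with _ | i <;> rcases j with _ | j
    · rfl
    · simp at hij; exact absurd hij.symm (hc j (by omega))
    · simp at hij; exact absurd hij (hc i (by omega))
    · simp at hij; rw [h.1 i j (by omega) (by omega) hij]
  · rcases i with _ | i
    · simpa using hw.symm
    · simpa using h.2 i (by omega)

lemma hl_two (G : SimpleGraph V) [DecidableRel G.Adj] {v a b w : V} (hd : G.degree v ≤ 2)
    (hab : a ≠ b) (ha : G.Adj v a) (hb : G.Adj v b) (hw : G.Adj v w) : w = a ∨ w = b := by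
  by_contra hc
  push Not at hc
  have : ({a, b, w} : Finset V) ⊆ G.neighborFinset v := by
    intro z hz; simp at hz; rcases hz with rfl | rfl | rfl <;> simpa
  have := Finset.card_le_card this
  rw [SimpleGraph.card_neighborFinset_eq_degree, Finset.card_eq_three.2
    ⟨a, b, w, hab, hc.1.symm, hc.2.symm, rfl⟩] at this
  omega

lemma hl_end (G : SimpleGraph V) [DecidableRel G.Adj] (h2 : ∀ v, G.degree v ≤ 2)
    {n : ℕ} {p : ℕ → V} (h : HLPath G n p)
    (hmax : ∀ q, ¬ HLPath G (n + 1) q) {w : V} (hw : G.Adj (p 0) w) :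
    (1 ≤ n ∧ p 1 = w) ∨ (2 ≤ n ∧ p n = w) := by
  obtain ⟨j, hj, rfl⟩ := hl_path_ext G h hmax hw
  have hj0 : j ≠ 0 := by rintro rfl; exact hw.ne rfl
  by_cases hj1 : j = 1
  · subst hj1; exact Or.inl ⟨hj, rfl⟩
  by_cases hjn : j = n
  · subst hjn; exact Or.inr ⟨by omega, rfl⟩
  obtain ⟨k, rfl⟩ : ∃ k, j = k + 1 := ⟨j - 1, by omega⟩
  rcases hl_two G (h2 (p (k + 1))) (a := p k) (b := p (k + 1 + 1))
    (fun e => by have := h.1 _ _ (by omega) (by omega) e; omega)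
    (h.2 k (by omega)).symm (h.2 (k + 1) (by omega)) hw.symm with e | e
  · have := h.1 _ _ (by omega) (by omega) e; omega
  · have := h.1 _ _ (by omega) (by omega) e; omega

lemma hl_case2 (G : SimpleGraph V) [DecidableRel G.Adj] (hconn : G.Connected)
    (hg : 5 ≤ G.egirth) (h2 : ∀ v, G.degree v ≤ 2) :
    (∃ k : ℕ, 1 ≤ k ∧ Nonempty (G ≃g SimpleGraph.pathGraph k)) ∨
       (∃ n : ℕ, 5 ≤ n ∧ Nonempty (G ≃g SimpleGraph.cycleGraph n)) := by
  classical
  obtain ⟨n, ⟨p, hp⟩, hmax⟩ : ∃ n, (∃ p, HLPath G n p) ∧ ∀ q, ¬ HLPath G (n + 1) q := by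
    by_contra hc
    push Not at hc
    have hall : ∀ n, ∃ p, HLPath G n p := by
      intro n
      induction n with
      | zero =>
        obtain ⟨v⟩ := hconn.nonempty
        exact ⟨fun _ => v, fun i j hi hj _ => by omega, fun i hi => by omega⟩
      | succ n ih => exact hc n ih
    obtain ⟨p, hp⟩ := hall (Fintype.card V)
    have := Fintype.card_le_of_injective (fun i : Fin (Fintype.card V + 1) => p i)
      (fun i j hij => Fin.ext (hp.1 _ _ (by omega) (by omega) hij))
    simp at this
  have hfirst : ∀ w, G.Adj (p 0) w → (1 ≤ n ∧ p 1 = w) ∨ (2 ≤ n ∧ p n = w) :=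
    fun w hw => hl_end G h2 hp hmax hw
  have hlast : ∀ w, G.Adj (p n) w → (1 ≤ n ∧ p (n - 1) = w) ∨ (2 ≤ n ∧ p 0 = w) := by
    intro w hw
    have := hl_end G h2 (hl_path_rev G hp) hmax (w := w) (by simpa using hw)
    simpa using this
  have hmid : ∀ i w, i + 1 < n → G.Adj (p (i + 1)) w → w = p i ∨ w = p (i + 2) := by
    intro i w hi hw
    exact hl_two G (h2 (p (i + 1))) 
      (fun e => by have := hp.1 _ _ (by omega) (by omega) e; omega)
      (hp.2 i (by omega)).symm (hp.2 (i + 1) (by omega)) hw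
  by_cases hcyc : 2 ≤ n ∧ G.Adj (p 0) (p n)
  · right
    obtain ⟨hn2, hadj⟩ := hcyc
    have hn5 : 5 ≤ n + 1 := by
      by_contra hlt
      have : n = 2 ∨ n = 3 := by omega
      rcases this with rfl | rfl
      · exact hl_tri G hg (hp.2 0 (by omega)) (hp.2 1 (by omega)) hadj.symm
      · have := hl_quad G hg (a := p 0) (c := p 2) (b := p 1) (d := p 3)
          (fun e => by have := hp.1 _ _ (by omega) (by omega) e; omega)
          (hp.2 0 (by omega)) (hp.2 1 (by omega)) hadj (hp.2 2 (by omega)).symm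
        have := hp.1 _ _ (by omega) (by omega) this; omega
    refine ⟨n + 1, hn5, ?_⟩
    have hadjc : ∀ u v : Fin (n + 1), (SimpleGraph.cycleGraph (n + 1)).Adj u v ↔
        (u.val + 1 = v.val ∨ v.val + 1 = u.val ∨ (u.val = 0 ∧ v.val = n) ∨
          (u.val = n ∧ v.val = 0)) := by
      intro u v
      rw [SimpleGraph.cycleGraph_adj']
      have hu := u.2
      have hv := v.2
      rw [Fin.sub_def, Fin.sub_def]
      simp only
      rcases Nat.lt_trichotomy u.val v.val with h | h | h
      · rw [Nat.mod_eq_of_lt (a := n + 1 - v.val + u.val) (by omega),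
          show n + 1 - u.val + v.val = (v.val - u.val) + (n + 1) by omega, Nat.add_mod_right,
          Nat.mod_eq_of_lt (by omega)]
        omega
      · have hm : (n + 1 - v.val + v.val) % (n + 1) = 0 := by
          rw [show n + 1 - v.val + v.val = n + 1 by omega, Nat.mod_self]
        rw [h, hm]
        omega
      · rw [Nat.mod_eq_of_lt (a := n + 1 - u.val + v.val) (by omega),
          show n + 1 - v.val + u.val = (u.val - v.val) + (n + 1) by omega, Nat.add_mod_right,
          Nat.mod_eq_of_lt (by omega)]
        omega
    refine hl_iso G hconn _ (fun i : Fin (n + 1) => p i)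
      (fun i j hij => Fin.ext (hp.1 _ _ (by omega) (by omega) hij)) ?_ ?_
    · intro u v huv
      rw [hadjc] at huv
      rcases huv with h | h | ⟨h, h'⟩ | ⟨h, h'⟩
      · simp only [← h]; exact hp.2 _ (by omega)
      · simp only [← h]; exact (hp.2 _ (by omega)).symm
      · simp only [h, h']; exact hadj
      · simp only [h, h']; exact hadj.symm
    · rintro ⟨u, hu⟩ w hw
      simp only at hw
      by_cases hu0 : u = 0
      · subst hu0
        rcases hfirst w hw with ⟨a, b⟩ | ⟨a, b⟩
        · exact ⟨⟨1, by omega⟩, by rw [hadjc]; simp, b⟩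
        · exact ⟨⟨n, by omega⟩, by rw [hadjc]; simp, b⟩
      by_cases hun : u = n
      · subst hun
        rcases hlast w hw with ⟨a, b⟩ | ⟨a, b⟩
        · exact ⟨⟨u - 1, by omega⟩, by rw [hadjc]; simp; omega, b⟩
        · exact ⟨⟨0, by omega⟩, by rw [hadjc]; simp, b⟩
      · obtain ⟨k, rfl⟩ : ∃ k, u = k + 1 := ⟨u - 1, by omega⟩
        rcases hmid k w (by omega) hw with rfl | rfl
        · exact ⟨⟨k, by omega⟩, by rw [hadjc]; simp, rfl⟩
        · exact ⟨⟨k + 2, by omega⟩, by rw [hadjc]; simp, rfl⟩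
  · left
    refine ⟨n + 1, by omega, hl_iso G hconn _ (fun i : Fin (n + 1) => p i)
      (fun i j hij => Fin.ext (hp.1 _ _ (by omega) (by omega) hij)) ?_ ?_⟩
    · intro u v huv
      rw [SimpleGraph.pathGraph_adj] at huv
      rcases huv with h | h
      · simp only [← h]; exact hp.2 _ (by omega)
      · simp only [← h]; exact (hp.2 _ (by omega)).symm
    · rintro ⟨u, hu⟩ w hw
      simp only at hw
      by_cases hu0 : u = 0
      · subst hu0
        rcases hfirst w hw with ⟨a, b⟩ | ⟨a, b⟩
        · exact ⟨⟨1, by omega⟩, by rw [SimpleGraph.pathGraph_adj]; simp, b⟩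
        · exact absurd ⟨a, b ▸ hw⟩ hcyc
      by_cases hun : u = n
      · subst hun
        rcases hlast w hw with ⟨a, b⟩ | ⟨a, b⟩
        · exact ⟨⟨u - 1, by omega⟩, by rw [SimpleGraph.pathGraph_adj]; simp; omega, b⟩
        · exact absurd ⟨a, b ▸ hw.symm⟩ hcyc
      · obtain ⟨k, rfl⟩ : ∃ k, u = k + 1 := ⟨u - 1, by omega⟩
        rcases hmid k w (by omega) hw with rfl | rfl
        · exact ⟨⟨k, by omega⟩, by rw [SimpleGraph.pathGraph_adj]; simp, rfl⟩
        · exact ⟨⟨k + 2, by omega⟩, by rw [SimpleGraph.pathGraph_adj]; simp, rfl⟩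

lemma hl_one (G : SimpleGraph V) [DecidableRel G.Adj] {v a w : V} (hd : G.degree v = 1)
    (ha : G.Adj v a) (hw : G.Adj v w) : w = a := by
  obtain ⟨b, hb⟩ := Finset.card_eq_one.1 ((G.card_neighborFinset_eq_degree v).trans hd)
  have h1 : a ∈ G.neighborFinset v := by simpa
  have h2 : w ∈ G.neighborFinset v := by simpa
  rw [hb] at h1 h2
  simp at h1 h2
  rw [h1, h2]

lemma hl_star (G : SimpleGraph V) [DecidableRel G.Adj] (hconn : G.Connected) (c : V)
    (h : ∀ y, G.Adj c y → G.degree y = 1) :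
    Nonempty (G ≃g completeBipartiteGraph Unit (Fin (G.degree c))) := by
  let e := (G.neighborFinset c).equivFinOfCardEq (G.card_neighborFinset_eq_degree c)
  have he : ∀ i, G.Adj c (e.symm i) := fun i => by
    exact (G.mem_neighborFinset _ _).1 (e.symm i).2
  refine hl_iso G hconn _ (fun s : Unit ⊕ Fin (G.degree c) => s.elim (fun _ => c)
    (fun i => (e.symm i : V))) ?_ ?_ ?_
  · rintro (⟨⟩ | i) (⟨⟩ | j) hij
    · rfl
    · exact absurd hij (he j).ne
    · exact absurd hij (he i).ne'
    · simp only [Sum.elim_inr] at hij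
      rw [e.symm.injective (Subtype.ext hij)]
  · rintro (⟨⟩ | i) (⟨⟩ | j) hij
    · simp [completeBipartiteGraph] at hij
    · exact he j
    · exact (he i).symm
    · simp [completeBipartiteGraph] at hij
  · rintro (⟨⟩ | i) w hw
    · refine ⟨Sum.inr (e ⟨w, by simpa using hw⟩), by simp [completeBipartiteGraph], by simp⟩
    · exact ⟨Sum.inl (), by simp [completeBipartiteGraph],
        (hl_one G (h _ (he i)) (he i).symm hw).symm⟩

lemma hl_spider (G : SimpleGraph V) [DecidableRel G.Adj] (hconn : G.Connected)
    (c : V) (y z : Fin 3 → V) (hy : Function.Injective y)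
    (hyc : ∀ w, G.Adj c w ↔ ∃ i, w = y i) (hc : 3 ≤ G.degree c)
    (hd : ∀ i, G.degree (y i) = 1 ∨ G.degree (y i) = 2)
    (hz : ∀ i, G.degree (y i) = 2 → z i ≠ c ∧ G.Adj (y i) (z i) ∧ G.degree (z i) = 1) :
    Nonempty (G ≃g spiderGraph (fun i => G.degree (y i))) := by
  have hcy : ∀ i, G.Adj c (y i) := fun i => (hyc _).2 ⟨i, rfl⟩
  have hyz : ∀ i, G.degree (y i) = 2 → ∀ j, z i ≠ y j := by
    intro i hi j e
    obtain ⟨h1, h2, h3⟩ := hz i hi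
    rw [e] at h2 h3
    have h4 := hl_one G h3 h2.symm (hcy j).symm
    rw [h4] at hc; omega
  have hsa : ∀ (l : Fin 3 → ℕ) i (h : 0 < l i), (spiderGraph l).Adj none (some ⟨i, ⟨0, h⟩⟩) := by
    intro l i h
    simp only [spiderGraph, SimpleGraph.fromRel_adj]
    exact ⟨by simp, Or.inl (Or.inl ⟨trivial, i, h, rfl⟩)⟩
  have hsb : ∀ (l : Fin 3 → ℕ) i (h : 0 < l i) (h' : 1 < l i),
      (spiderGraph l).Adj (some ⟨i, ⟨0, h⟩⟩) (some ⟨i, ⟨1, h'⟩⟩) := by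
    intro l i h h'
    simp only [spiderGraph, SimpleGraph.fromRel_adj]
    exact ⟨by simp, Or.inl (Or.inr ⟨i, 0, h, h', rfl, rfl⟩)⟩
  let φ : Option (Σ i : Fin 3, Fin (G.degree (y i))) → V := fun s =>
    match s with
    | none => c
    | some ⟨i, j⟩ => if j.val = 0 then y i else z i
  have hφ1 : ∀ i j, φ (some ⟨i, j⟩) = if j.val = 0 then y i else z i := fun _ _ => rfl
  have hφ0 : φ none = c := rfl
  have hj2 : ∀ i (j : Fin (G.degree (y i))), j.val ≠ 0 → j.val = 1 ∧ G.degree (y i) = 2 := by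
    intro i j hj; have := j.2; have := hd i; omega
  have hadj : ∀ u v, (u = none ∧ ∃ (i : Fin 3) (h : 0 < G.degree (y i)), v = some ⟨i, ⟨0, h⟩⟩) ∨
    (∃ (i : Fin 3) (j : ℕ) (h1 : j < G.degree (y i)) (h2 : j + 1 < G.degree (y i)),
      u = some ⟨i, ⟨j, h1⟩⟩ ∧ v = some ⟨i, ⟨j + 1, h2⟩⟩) → G.Adj (φ u) (φ v) := by
    rintro u v (⟨rfl, i, h, rfl⟩ | ⟨i, j, h1, h2, rfl, rfl⟩)
    · exact hcy i
    · have : j = 0 := by have := hd i; omega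
      subst this
      exact (hz i (by have := hd i; omega)).2.1
  refine hl_iso G hconn _ φ ?_ ?_ ?_
  · rintro (_ | ⟨i, j⟩) (_ | ⟨i', j'⟩) hij
    · rfl
    · rw [hφ0, hφ1] at hij
      split_ifs at hij with h
      · exact absurd hij (hcy i').ne
      · exact absurd hij.symm (hz i' (hj2 _ _ h).2).1
    · rw [hφ0, hφ1] at hij
      split_ifs at hij with h
      · exact absurd hij.symm (hcy i).ne
      · exact absurd hij (hz i (hj2 _ _ h).2).1
    · rw [hφ1, hφ1] at hij
      have hii : i = i' := by
        split_ifs at hij with h h' h'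
        · exact hy hij
        · exact absurd hij.symm (hyz i' (hj2 _ _ h').2 i)
        · exact absurd hij (hyz i (hj2 _ _ h).2 i')
        · obtain ⟨_, a2, a3⟩ := hz i (hj2 _ _ h).2
          obtain ⟨_, b2, b3⟩ := hz i' (hj2 _ _ h').2
          rw [← hij] at b2
          exact hy (hl_one G a3 b2.symm a2.symm)
      subst hii
      have : j = j' := by
        apply Fin.ext
        split_ifs at hij with h h' h'
        · omega
        · exact absurd hij.symm (hyz i (hj2 _ _ h').2 i)
        · exact absurd hij (hyz i (hj2 _ _ h).2 i)
        · have := hj2 _ _ h; have := hj2 _ _ h'; omega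
      rw [this]
  · intro u v huv
    simp only [spiderGraph, SimpleGraph.fromRel_adj] at huv
    rcases huv.2 with h | h
    · exact hadj _ _ h
    · exact (hadj _ _ h).symm
  · rintro (_ | ⟨i, j⟩) w hw
    · obtain ⟨i, rfl⟩ := (hyc w).1 hw
      exact ⟨some ⟨i, ⟨0, by have := hd i; omega⟩⟩, hsa _ _ _, rfl⟩
    · rw [hφ1] at hw
      split_ifs at hw with h
      · have hj : j.val = 0 := h
        obtain ⟨j, hjl⟩ := j
        obtain rfl : j = 0 := hj
        rcases hd i with h1 | h1
        · exact ⟨none, (hsa _ _ _).symm, (hl_one G h1 (hcy i).symm hw).symm⟩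
        · obtain ⟨a1, a2, a3⟩ := hz i h1
          rcases hl_two G h1.le a1.symm (hcy i).symm a2 hw with rfl | rfl
          · exact ⟨none, (hsa _ _ _).symm, rfl⟩
          · exact ⟨some ⟨i, ⟨1, by omega⟩⟩, hsb _ _ _ _, rfl⟩
      · obtain ⟨b1, b2⟩ := hj2 _ _ h
        obtain ⟨a1, a2, a3⟩ := hz i b2
        obtain ⟨j, hjl⟩ := j
        obtain rfl : j = 1 := b1
        exact ⟨some ⟨i, ⟨0, by omega⟩⟩, (hsb _ _ _ _).symm, (hl_one G a3 a2.symm hw).symm⟩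

lemma hl_spider_l (G : SimpleGraph V) [DecidableRel G.Adj] (y : Fin 3 → V) (l : Fin 3 → ℕ)
    (h : Nonempty (G ≃g spiderGraph (fun i => G.degree (y i)))) (h0 : G.degree (y 0) = l 0)
    (h1 : G.degree (y 1) = l 1) (h2 : G.degree (y 2) = l 2) : Nonempty (G ≃g spiderGraph l) := by
  have hl : (fun i => G.degree (y i)) = l := by
    funext i; fin_cases i <;> assumption
  subst hl
  exact h

lemma hl_case3 (G : SimpleGraph V) [DecidableRel G.Adj] (hconn : G.Connected)
    (hdeg : ∀ v, 0 < G.degree v) (hP : HLP G) (c : V) (hc : 3 ≤ G.degree c) :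
    (∃ n : ℕ, 3 ≤ n ∧ Nonempty (G ≃g completeBipartiteGraph Unit (Fin n))) ∨
       Nonempty (G ≃g spiderGraph ![1, 1, 2]) ∨
       Nonempty (G ≃g spiderGraph ![1, 2, 2]) ∨
       Nonempty (G ≃g spiderGraph ![2, 2, 2]) := by
  by_cases hall : ∀ y, G.Adj c y → G.degree y = 1
  · exact Or.inl ⟨_, hc, hl_star G hconn c hall⟩
  right
  push Not at hall
  obtain ⟨y0, hy0, hy0d⟩ := hall
  have hc3 : G.degree c = 3 := (hP y0 c hy0.symm hc (by have := hdeg y0; omega)).2.1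
  let e := (G.neighborFinset c).equivFinOfCardEq ((G.card_neighborFinset_eq_degree c).trans hc3)
  let y' : Fin 3 → V := fun i => e.symm i
  let σ := Tuple.sort (fun i => G.degree (y' i))
  have hmono : Monotone ((fun i => G.degree (y' i)) ∘ σ) := Tuple.monotone_sort _
  let y : Fin 3 → V := fun i => y' (σ i)
  have hyinj : Function.Injective y := by
    intro i j hij
    exact σ.injective (e.symm.injective (Subtype.ext hij))
  have hyc : ∀ w, G.Adj c w ↔ ∃ i, w = y i := by
    intro w
    constructor
    · intro hw
      exact ⟨σ.symm (e ⟨w, by simpa using hw⟩), by simp [y, y']⟩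
    · rintro ⟨i, rfl⟩
      exact (G.mem_neighborFinset _ _).1 (e.symm (σ i)).2
  have hcy : ∀ i, G.Adj c (y i) := fun i => (hyc _).2 ⟨i, rfl⟩
  have hd : ∀ i, G.degree (y i) = 1 ∨ G.degree (y i) = 2 := by
    intro i
    have := hdeg (y i)
    by_cases h : 2 ≤ G.degree (y i)
    · exact Or.inr (hP _ _ (hcy i).symm hc h).1
    · omega
  have hz : ∀ i, ∃ z, G.degree (y i) = 2 → z ≠ c ∧ G.Adj (y i) z ∧ G.degree z = 1 := by
    intro i
    by_cases h : G.degree (y i) = 2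
    · have h1 : 1 < (G.neighborFinset (y i)).card := by
        rw [SimpleGraph.card_neighborFinset_eq_degree]; omega
      obtain ⟨z, hz1, hz2⟩ := Finset.exists_mem_ne h1 c
      have hz1' : G.Adj (y i) z := by simpa using hz1
      exact ⟨z, fun _ => ⟨hz2, hz1', (hP _ _ (hcy i).symm hc h.ge).2.2 z hz1' hz2⟩⟩
    · exact ⟨c, fun h' => absurd h' h⟩
  choose z hz using hz
  have hiso := hl_spider G hconn c y z hyinj hyc hc hd hz
  have m01 : G.degree (y 0) ≤ G.degree (y 1) := hmono (by decide : (0 : Fin 3) ≤ 1)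
  have m12 : G.degree (y 1) ≤ G.degree (y 2) := hmono (by decide : (1 : Fin 3) ≤ 2)
  have h2 : G.degree (y 2) = 2 := by
    by_contra hne
    obtain ⟨i, rfl⟩ := (hyc y0).1 hy0
    have := hd 0; have := hd 1; have := hd 2
    fin_cases i <;> simp at hy0d <;> omega
  rcases hd 0 with h0 | h0 <;> rcases hd 1 with h1 | h1
  · exact Or.inl (hl_spider_l G y _ hiso h0 h1 h2)
  · exact Or.inr (Or.inl (hl_spider_l G y _ hiso h0 h1 h2))
  · omega
  · exact Or.inr (Or.inr (hl_spider_l G y _ hiso h0 h1 h2))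

lemma hl_P_iso {W : Type*} [Fintype W] [DecidableEq W] (G : SimpleGraph V) [DecidableRel G.Adj]
    (H : SimpleGraph W) [DecidableRel H.Adj] (φ : G ≃g H) (h : HLP H) : HLP G := by
  intro x y hxy hy hx
  have hx' := φ.degree_eq x
  have hy' := φ.degree_eq y
  obtain ⟨a, b, c⟩ := h (φ x) (φ y) (φ.map_adj_iff.2 hxy) (by omega) (by omega)
  refine ⟨by omega, by omega, fun z hz hzy => ?_⟩
  have hz' := φ.degree_eq z
  have := c (φ z) (φ.map_adj_iff.2 hz) (fun e => hzy (φ.injective e))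
  omega

lemma hl_P_le (G : SimpleGraph V) [DecidableRel G.Adj] (h : ∀ v, G.degree v ≤ 2) : HLP G := by
  intro x y _ hy
  have := h y
  omega

lemma hl_P_cycle (n : ℕ) : HLP (SimpleGraph.cycleGraph n) := by
  apply hl_P_le
  intro v
  by_cases hn : 3 ≤ n
  · obtain ⟨m, rfl⟩ := Nat.exists_eq_add_of_le' hn
    exact SimpleGraph.cycleGraph_degree_three_le.le
  · have := SimpleGraph.degree_lt_card_verts (G := SimpleGraph.cycleGraph n) v
    simp at this
    omega

lemma hl_P_path (n : ℕ) [DecidableRel (SimpleGraph.pathGraph n).Adj] :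
    HLP (SimpleGraph.pathGraph n) := by
  apply hl_P_le
  intro v
  by_cases hn : 3 ≤ n
  · obtain ⟨m, rfl⟩ := Nat.exists_eq_add_of_le' hn
    exact (SimpleGraph.degree_le_of_le SimpleGraph.pathGraph_le_cycleGraph).trans
      SimpleGraph.cycleGraph_degree_three_le.le
  · have := SimpleGraph.degree_lt_card_verts (G := SimpleGraph.pathGraph n) v
    simp at this
    omega

lemma hl_P_star (n : ℕ) [DecidableRel (completeBipartiteGraph Unit (Fin n)).Adj] :
    HLP (completeBipartiteGraph Unit (Fin n)) := by
  have key : ∀ j, (completeBipartiteGraph Unit (Fin n)).degree (Sum.inr j) ≤ 1 := by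
    intro j
    rw [← SimpleGraph.card_neighborFinset_eq_degree, Finset.card_le_one]
    rintro (⟨⟩ | a) ha (⟨⟩ | b) hb
    · rfl
    all_goals
      rw [SimpleGraph.mem_neighborFinset] at ha hb
      simp [completeBipartiteGraph] at ha hb
  rintro (⟨⟩ | x) (⟨⟩ | y) hxy hy hx
  · simp [completeBipartiteGraph] at hxy
  · have := key y; omega
  · have := key x; omega
  · simp [completeBipartiteGraph] at hxy

/-- Boolean adjacency of spiders. -/
def hlSpAdj (l : Fin 3 → ℕ) : Option (Σ i : Fin 3, Fin (l i)) → Option (Σ i : Fin 3, Fin (l i)) → Bool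
  | none, none => false
  | none, some ⟨_, j⟩ => j.val == 0
  | some ⟨_, j⟩, none => j.val == 0
  | some ⟨i, j⟩, some ⟨i', j'⟩ => (i == i') && ((j.val + 1 == j'.val) || (j'.val + 1 == j.val))

lemma hlSpAdj_iff (l : Fin 3 → ℕ) (a b : Option (Σ i : Fin 3, Fin (l i))) :
    (spiderGraph l).Adj a b ↔ hlSpAdj l a b = true := by
  have h1 : ∀ a b, ((a = none ∧ ∃ (i : Fin 3) (h : 0 < l i), b = some ⟨i, ⟨0, h⟩⟩) ∨
    (∃ (i : Fin 3) (j : ℕ) (h1 : j < l i) (h2 : j + 1 < l i),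
      a = some ⟨i, ⟨j, h1⟩⟩ ∧ b = some ⟨i, ⟨j + 1, h2⟩⟩)) →
      a ≠ b ∧ hlSpAdj l a b = true ∧ hlSpAdj l b a = true := by
    rintro a b (⟨rfl, i, h, rfl⟩ | ⟨i, j, h1, h2, rfl, rfl⟩)
    · simp [hlSpAdj]
    · simp [hlSpAdj]
  unfold spiderGraph
  rw [SimpleGraph.fromRel_adj]
  constructor
  · rintro ⟨_, h | h⟩
    · exact (h1 _ _ h).2.1
    · exact (h1 _ _ h).2.2
  · intro h
    have : ((a = none ∧ ∃ (i : Fin 3) (h : 0 < l i), b = some ⟨i, ⟨0, h⟩⟩) ∨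
    (∃ (i : Fin 3) (j : ℕ) (h1 : j < l i) (h2 : j + 1 < l i),
      a = some ⟨i, ⟨j, h1⟩⟩ ∧ b = some ⟨i, ⟨j + 1, h2⟩⟩)) ∨
      ((b = none ∧ ∃ (i : Fin 3) (h : 0 < l i), a = some ⟨i, ⟨0, h⟩⟩) ∨
    (∃ (i : Fin 3) (j : ℕ) (h1 : j < l i) (h2 : j + 1 < l i),
      b = some ⟨i, ⟨j, h1⟩⟩ ∧ a = some ⟨i, ⟨j + 1, h2⟩⟩)) := by
      rcases a with _ | ⟨i, j, hj⟩ <;> rcases b with _ | ⟨i', j', hj'⟩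
      · simp [hlSpAdj] at h
      · simp [hlSpAdj] at h
        subst h
        exact Or.inl (Or.inl ⟨rfl, i', hj', rfl⟩)
      · simp [hlSpAdj] at h
        subst h
        exact Or.inr (Or.inl ⟨rfl, i, hj, rfl⟩)
      · simp [hlSpAdj] at h
        obtain ⟨rfl, h | h⟩ := h
        · subst h
          exact Or.inl (Or.inr ⟨i, j, hj, hj', rfl, rfl⟩)
        · subst h
          exact Or.inr (Or.inr ⟨i, j', hj', hj, rfl, rfl⟩)
    refine ⟨?_, this⟩
    rcases this with h | h
    · exact (h1 _ _ h).1
    · exact (h1 _ _ h).1.symm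

instance hlSpDec (l : Fin 3 → ℕ) : DecidableRel (spiderGraph l).Adj := fun a b =>
  decidable_of_iff _ (hlSpAdj_iff l a b).symm

lemma hl_P_s1 : HLP (spiderGraph ![1, 1, 2]) := by unfold HLP; decide

lemma hl_P_s2 : HLP (spiderGraph ![1, 2, 2]) := by unfold HLP; decide

lemma hl_P_s3 : HLP (spiderGraph ![2, 2, 2]) := by unfold HLP; decide

/-- (Hua–Lin classification of `CD(∞,0)`-Ricci-flat graphs of girth at least 5.)
A finite connected simple graph of girth at least 5 with all vertex degrees positive
satisfies `CD(∞,0)`, i.e. `Γ₂(f,f)(x) ≥ 0` for all `f` and `x`, if and only if it is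
isomorphic to a path graph `P_k` (`k ≥ 1` vertices), a cycle graph `C_n` (`n ≥ 5`),
a star graph `Star_n` (`n ≥ 3` leaves), or one of the three extended star graphs with
arm lengths `(1,1,2)`, `(1,2,2)`, `(2,2,2)`. -/
theorem hua_lin_classification_CD_ricci_flat
    (G : SimpleGraph V) [DecidableRel G.Adj]
    (hconn : G.Connected) (hgirth : 5 ≤ G.egirth) (hdeg : ∀ v, 0 < G.degree v) :
    (∀ (f : V → ℝ) (x : V), 0 ≤ G.gamma2Op f f x) ↔
      ((∃ k : ℕ, 1 ≤ k ∧ Nonempty (G ≃g SimpleGraph.pathGraph k)) ∨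
       (∃ n : ℕ, 5 ≤ n ∧ Nonempty (G ≃g SimpleGraph.cycleGraph n)) ∨
       (∃ n : ℕ, 3 ≤ n ∧ Nonempty (G ≃g completeBipartiteGraph Unit (Fin n))) ∨
       Nonempty (G ≃g spiderGraph ![1, 1, 2]) ∨
       Nonempty (G ≃g spiderGraph ![1, 2, 2]) ∨
       Nonempty (G ≃g spiderGraph ![2, 2, 2])) := by
  classical
  have hiff : (∀ (f : V → ℝ) (x : V), 0 ≤ G.gamma2Op f f x) ↔ HLP G := by
    constructor
    · intro h
      exact hl_P_of G hdeg fun x => (hl_quadform G hdeg hgirth x).1 fun f => h f x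
    · intro h f x
      exact (hl_quadform G hdeg hgirth x).2 (hl_of_P G hdeg h x) f
  rw [hiff]
  constructor
  · intro hP
    by_cases h2 : ∀ v, G.degree v ≤ 2
    · rcases hl_case2 G hconn hgirth h2 with h | h
      · exact Or.inl h
      · exact Or.inr (Or.inl h)
    · push Not at h2
      obtain ⟨c, hc⟩ := h2
      exact Or.inr (Or.inr (hl_case3 G hconn hdeg hP c hc))
  · rintro (⟨k, _, ⟨φ⟩⟩ | ⟨n, _, ⟨φ⟩⟩ | ⟨n, _, ⟨φ⟩⟩ | ⟨⟨φ⟩⟩ | ⟨⟨φ⟩⟩ | ⟨⟨φ⟩⟩)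
    · exact hl_P_iso G _ φ (hl_P_path k)
    · exact hl_P_iso G _ φ (hl_P_cycle n)
    · exact hl_P_iso G _ φ (hl_P_star n)
    · exact hl_P_iso G _ φ hl_P_s1
    · exact hl_P_iso G _ φ hl_P_s2
    · exact hl_P_iso G _ φ hl_P_s3
end

section
/- Let G be the directed graph on vertices {1,2,3,4,5} with the nine arrows 1→4, 1→5, 2→4, 3→1, 3→2, 3→5, 4→3, 5→2, 5→4 (an orientation of the 5-vertex dipyramid graph). Then the spaces Ω_p of ∂-invariant allowed p-paths of G satisfy dim Ω₀ = 5, dim Ω₁ = 9, dim Ω₂ = 6, dim Ω₃ = 2, and Ω_p = 0 for all p ≥ 4; consequently the graph Euler number χ(G) = Σ_p (−1)^p dim Ω_p = 5 − 9 + 6 − 2 = 0. -/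
open Finsupp

/-- `Λ_p`: the free real vector space on elementary `p`-paths (ordered `(p+1)`-tuples of
vertices) of a finite vertex set `V`. -/
abbrev elemPathSpace (V : Type*) (p : ℕ) : Type _ := (Fin (p + 1) → V) →₀ ℝ

/-- An elementary `p`-path is regular if no two consecutive vertices coincide. -/
def IsRegularPath {V : Type*} {p : ℕ} (s : Fin (p + 1) → V) : Prop :=
  ∀ k : Fin p, s k.castSucc ≠ s k.succ

/-- An elementary `p`-path is allowed, for a digraph with arrow relation `R`, if every
consecutive pair of vertices is joined by an arrow. -/
def IsAllowedPath {V : Type*} (R : V → V → Prop) {p : ℕ} (s : Fin (p + 1) → V) : Prop :=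
  ∀ k : Fin p, R (s k.castSucc) (s k.succ)

/-- The boundary operator `∂ : Λ_{p+1} → Λ_p` on elementary paths:
`∂ e_{i₀…i_{p+1}} = ∑_q (−1)^q e_{i₀…î_q…i_{p+1}}`. -/
noncomputable def pathBoundary (V : Type*) (p : ℕ) :
    elemPathSpace V (p + 1) →ₗ[ℝ] elemPathSpace V p :=
  Finsupp.lift (elemPathSpace V p) ℝ (Fin (p + 2) → V)
    (fun s => ∑ q : Fin (p + 2), ((-1 : ℝ) ^ (q : ℕ)) • Finsupp.single (s ∘ q.succAbove) 1)

/-- The projection `Λ_p → Λ_p` onto the span `R_p` of the regular elementary paths,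
setting every irregular elementary path to zero. -/
noncomputable def regularProj (V : Type*) [DecidableEq V] (p : ℕ) :
    elemPathSpace V p →ₗ[ℝ] elemPathSpace V p :=
  Finsupp.lift (elemPathSpace V p) ℝ (Fin (p + 1) → V)
    (fun s => if ∀ k : Fin p, s k.castSucc ≠ s k.succ then Finsupp.single s 1 else 0)

/-- The boundary operator on the regular part: compose `∂` with the projection killing
irregular paths (this is the boundary operator of `R_p`, the quotient of `Λ_p` by the
irregular paths). -/
noncomputable def regularBoundary (V : Type*) [DecidableEq V] (p : ℕ) :
    elemPathSpace V (p + 1) →ₗ[ℝ] elemPathSpace V p :=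
  (regularProj V p).comp (pathBoundary V p)

/-- `A_p`: the span of the allowed (regular) elementary `p`-paths of the digraph `R`. -/
noncomputable def allowedSubspace {V : Type*} (R : V → V → Prop) (p : ℕ) :
    Submodule ℝ (elemPathSpace V p) :=
  Submodule.span ℝ {x | ∃ s : Fin (p + 1) → V, IsAllowedPath R s ∧ x = Finsupp.single s 1}

/-- `Ω_p = { v ∈ A_p : ∂v ∈ A_{p−1} }`, the `∂`-invariant subspace of allowed paths
(with `Ω₀ = A₀`). -/
noncomputable def omegaSubspace {V : Type*} [DecidableEq V] (R : V → V → Prop) :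
    (p : ℕ) → Submodule ℝ (elemPathSpace V p)
  | 0 => allowedSubspace R 0
  | p + 1 => allowedSubspace R (p + 1) ⊓
      Submodule.comap (regularBoundary V p) (allowedSubspace R p)

/-- The arrows `1→4, 1→5, 2→4, 3→1, 3→2, 3→5, 4→3, 5→2, 5→4` (on vertices `1,…,5`,
relabelled `0,…,4`) of the chosen orientation of the 5-vertex dipyramid graph. -/
def dipyArrow : Fin 5 → Fin 5 → Prop := fun u v =>
  (u, v) ∈ ([(0, 3), (0, 4), (1, 3), (2, 0), (2, 1), (2, 4), (3, 2), (4, 1), (4, 3)] :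
    List (Fin 5 × Fin 5))

instance dipyArrowDec : DecidableRel dipyArrow := fun u v => by
  unfold dipyArrow; infer_instance

instance dipyAllowedDec {p : ℕ} (s : Fin (p + 1) → Fin 5) : Decidable (IsAllowedPath dipyArrow s) := by
  unfold IsAllowedPath; infer_instance

lemma mem_allowed_iff {V : Type*} (R : V → V → Prop) (p : ℕ) (v : elemPathSpace V p) :
    v ∈ allowedSubspace R p ↔ ∀ s, ¬ IsAllowedPath R s → v s = 0 := by
  have h : allowedSubspace R p = Finsupp.supported ℝ ℝ {s | IsAllowedPath R s} := by
    rw [Finsupp.supported_eq_span_single]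
    unfold allowedSubspace
    congr 1
    ext x
    simp [eq_comm]
  rw [h, Finsupp.mem_supported']
  rfl

lemma single_mem_allowed {V : Type*} (R : V → V → Prop) (p : ℕ) (s : Fin (p + 1) → V)
    (hs : IsAllowedPath R s) : (Finsupp.single s (1 : ℝ)) ∈ allowedSubspace R p :=
  Submodule.subset_span ⟨s, hs, rfl⟩

lemma regularProj_coe {V : Type*} [DecidableEq V] (p : ℕ) (w : elemPathSpace V p)
    (u : Fin (p + 1) → V) (hu : ∀ k : Fin p, u k.castSucc ≠ u k.succ) :
    regularProj V p w u = w u := by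
  induction w using Finsupp.induction_linear with
  | zero => simp
  | add f g hf hg => simp [hf, hg]
  | single s c =>
    unfold regularProj
    simp only [Finsupp.lift_apply, Finsupp.sum_single_index, zero_smul]
    by_cases h : s = u
    · subst h
      rw [if_pos hu]; simp
    · split_ifs <;> simp [Finsupp.single_apply, h]

lemma pathBoundary_coe {V : Type*} [Fintype V] [DecidableEq V] (p : ℕ)
    (v : elemPathSpace V (p + 1)) (u : Fin (p + 1) → V) :
    pathBoundary V p v u =
      ∑ q : Fin (p + 2), (-1 : ℝ) ^ (q : ℕ) * ∑ m : V, v (Fin.insertNth (α := fun _ => V) q m u) := by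
  induction v using Finsupp.induction_linear with
  | zero => simp
  | add f g hf hg => simp [hf, hg, Finset.sum_add_distrib, mul_add]
  | single s c =>
    unfold pathBoundary
    rw [Finsupp.lift_apply, Finsupp.sum_single_index (by simp), Finset.smul_sum,
      Finsupp.finsetSum_apply]
    simp only [Finsupp.smul_apply, smul_eq_mul]
    refine Finset.sum_congr rfl fun q _ => ?_
    rw [mul_left_comm]
    congr 1
    have : ∀ m : V, (Finsupp.single s c) (Fin.insertNth (α := fun _ => V) q m u) =
        if m = s q then (if s ∘ q.succAbove = u then c else 0) else 0 := by
      intro m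
      rw [Finsupp.single_apply, ← ite_and]
      congr 1
      rw [eq_comm (a := s), Fin.insertNth_eq_iff, eq_comm (a := u)]
      rfl
    simp [this, Finsupp.single_apply]

lemma omega_relation {V : Type*} [Fintype V] [DecidableEq V] (R : V → V → Prop) (p : ℕ)
    (v : elemPathSpace V (p + 2)) (hv : v ∈ omegaSubspace R (p + 2))
    (u : Fin (p + 2) → V) (hu : ∀ k : Fin (p + 1), u k.castSucc ≠ u k.succ)
    (k : Fin (p + 1)) (hk : ¬ R (u k.castSucc) (u k.succ)) :
    ∑ m : V, v (Fin.insertNth (α := fun _ => V) k.succ.castSucc m u) = 0 := by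
  obtain ⟨h1, h2⟩ := hv
  rw [SetLike.mem_coe, mem_allowed_iff] at h1
  rw [SetLike.mem_coe, Submodule.mem_comap, mem_allowed_iff] at h2
  have h3 := h2 u (fun h => hk (h k))
  unfold regularBoundary at h3
  rw [LinearMap.comp_apply, regularProj_coe _ _ _ hu, pathBoundary_coe,
    Finset.sum_eq_single k.succ.castSucc] at h3
  · simpa using h3
  · intro q _ hq
    refine mul_eq_zero_of_right _ (Finset.sum_eq_zero fun m _ => h1 _ fun hall => hk ?_)
    have hq' : (q : ℕ) ≠ k + 1 := fun h => hq (Fin.ext (by simpa using h))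
    rcases lt_or_gt_of_ne hq' with h | h
    · have e1 : k.succ.castSucc = q.succAbove k.castSucc := by
        rw [Fin.succAbove_of_le_castSucc _ _ (by simp [Fin.le_def]; omega)]; rfl
      have e2 : k.succ.succ = q.succAbove k.succ := by
        rw [Fin.succAbove_of_le_castSucc _ _ (by simp [Fin.le_def]; omega)]
      have := hall k.succ
      rwa [e1, e2, Fin.insertNth_apply_succAbove, Fin.insertNth_apply_succAbove] at this
    · have e1 : k.castSucc.castSucc = q.succAbove k.castSucc := by
        rw [Fin.succAbove_of_castSucc_lt _ _ (by simp [Fin.lt_def]; omega)]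
      have e2 : k.castSucc.succ = q.succAbove k.succ := by
        rw [Fin.succAbove_of_castSucc_lt _ _ (by simp [Fin.lt_def]; omega)]; rfl
      have := hall k.castSucc
      rwa [e1, e2, Fin.insertNth_apply_succAbove, Fin.insertNth_apply_succAbove] at this
  · simp

/-- A 2-path whose ends are not joined by an arrow and which is the only one between its ends. -/
def Killed (a b c : Fin 5) : Prop :=
  ¬ dipyArrow a c ∧ ∀ m, dipyArrow a m → dipyArrow m c → m = b

instance killedDec (a b c : Fin 5) : Decidable (Killed a b c) := by
  unfold Killed; infer_instance

lemma arrow_asymm : ∀ a b c : Fin 5, dipyArrow a b → dipyArrow b c → a ≠ c := by decide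
lemma arrow_ne : ∀ a b : Fin 5, dipyArrow a b → a ≠ b := by decide

lemma omega_killed (p : ℕ) (v : elemPathSpace (Fin 5) (p + 2))
    (hv : v ∈ omegaSubspace dipyArrow (p + 2)) (s : Fin (p + 3) → Fin 5) (k : Fin (p + 1))
    (hk : Killed (s k.castSucc.castSucc) (s k.succ.castSucc) (s k.succ.succ)) : v s = 0 := by
  have h1 : ∀ s, ¬ IsAllowedPath dipyArrow s → v s = 0 := (mem_allowed_iff _ _ _).1 hv.1
  by_cases hs : IsAllowedPath dipyArrow s
  swap
  · exact h1 s hs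
  set q : Fin (p + 3) := k.succ.castSucc with hq
  set u : Fin (p + 2) → Fin 5 := fun i => s (q.succAbove i) with hu
  have e1 : u k.castSucc = s k.castSucc.castSucc := by
    simp only [hu]
    rw [Fin.succAbove_of_castSucc_lt _ _ (by simp [Fin.lt_def, hq])]
  have e2 : u k.succ = s k.succ.succ := by
    simp only [hu]
    rw [Fin.succAbove_of_le_castSucc _ _ (by simp [Fin.le_def, hq])]
  have hreg : ∀ j : Fin (p + 1), u j.castSucc ≠ u j.succ := by
    intro j
    rcases lt_trichotomy j k with h | h | h
    · have f1 : u j.castSucc = s j.castSucc.castSucc := by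
        simp only [hu]
        rw [Fin.succAbove_of_castSucc_lt _ _ (by
          change (_ : ℕ) < _; have := Fin.lt_def.1 h; simp [hq]; omega)]
      have f2 : u j.succ = s j.castSucc.succ := by
        simp only [hu]
        rw [Fin.succAbove_of_castSucc_lt _ _ (by
          change (_ : ℕ) < _; have := Fin.lt_def.1 h; simp [hq]; omega)]; rfl
      rw [f1, f2]
      exact arrow_ne _ _ (hs _)
    · subst h
      rw [e1, e2]
      exact arrow_asymm _ _ _ (hs j.castSucc) (hs j.succ)
    · have f1 : u j.castSucc = s j.succ.castSucc := by
        simp only [hu]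
        rw [Fin.succAbove_of_le_castSucc _ _ (by
          change (_ : ℕ) ≤ _; have := Fin.lt_def.1 h; simp [hq]; omega)]; rfl
      have f2 : u j.succ = s j.succ.succ := by
        simp only [hu]
        rw [Fin.succAbove_of_le_castSucc _ _ (by
          change (_ : ℕ) ≤ _; have := Fin.lt_def.1 h; simp [hq]; omega)]
      rw [f1, f2]
      exact arrow_ne _ _ (hs _)
  have key := omega_relation dipyArrow p v hv u hreg k (by rw [e1, e2]; exact hk.1)
  rw [Finset.sum_eq_single (s q)] at key
  · have : Fin.insertNth (α := fun _ => Fin 5) q (s q) u = s := by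
      rw [Fin.insertNth_eq_iff]; exact ⟨rfl, rfl⟩
    rwa [← hq, this] at key
  · intro m _ hm
    refine h1 _ fun hall => hm (hk.2 m ?_ ?_)
    · have := hall k.castSucc
      rw [← e1, ← Fin.insertNth_apply_succAbove (α := fun _ => Fin 5) q m u]
      rw [Fin.succAbove_of_castSucc_lt _ _ (by simp [Fin.lt_def, hq])]
      convert this
      rw [show k.castSucc.succ = q from rfl, ← hq, Fin.insertNth_apply_same]
    · have := hall k.succ
      rw [← e2, ← Fin.insertNth_apply_succAbove (α := fun _ => Fin 5) q m u]
      rw [Fin.succAbove_of_le_castSucc _ _ (by simp [Fin.le_def, hq])]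
      convert this
      rw [← hq, Fin.insertNth_apply_same]
  · simp

lemma no_four : ∀ a b c d e : Fin 5, dipyArrow a b → dipyArrow b c → dipyArrow c d → dipyArrow d e →
    Killed a b c ∨ Killed b c d ∨ Killed c d e := by decide

lemma omega_high (p : ℕ) : omegaSubspace dipyArrow (p + 4) = ⊥ := by
  rw [eq_bot_iff]
  intro v hv
  rw [Submodule.mem_bot]
  ext s
  by_cases hs : IsAllowedPath dipyArrow s
  swap
  · exact (mem_allowed_iff _ _ _).1 hv.1 s hs
  have := no_four _ _ _ _ _ (hs ⟨0, by omega⟩) (hs ⟨1, by omega⟩) (hs ⟨2, by omega⟩)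
    (hs ⟨3, by omega⟩)
  rcases this with h | h | h
  · exact omega_killed (p + 2) v hv s ⟨0, by omega⟩ h
  · exact omega_killed (p + 2) v hv s ⟨1, by omega⟩ h
  · exact omega_killed (p + 2) v hv s ⟨2, by omega⟩ h

/-- Dimension count from a family dual to finitely many coordinate evaluations. -/
lemma finrank_of_dual {X : Type*} (W : Submodule ℝ (X →₀ ℝ)) {ι : Type*} [Fintype ι] [DecidableEq ι]
    (b : ι → (X →₀ ℝ)) (hb : ∀ i, b i ∈ W) (pt : ι → X)
    (hd : ∀ i j, b i (pt j) = if i = j then 1 else 0)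
    (hz : ∀ v ∈ W, (∀ j, v (pt j) = 0) → v = 0) : Module.finrank ℝ W = Fintype.card ι := by
  let f : W →ₗ[ℝ] (ι → ℝ) := LinearMap.pi fun j => (Finsupp.lapply (pt j)).comp W.subtype
  have hf : ∀ w j, f w j = (w : X →₀ ℝ) (pt j) := fun w j => rfl
  have hbij : Function.Bijective f := by
    constructor
    · rw [injective_iff_map_eq_zero]
      intro w hw
      apply Subtype.ext
      exact hz w w.2 fun j => by rw [← hf, hw]; rfl
    · intro c
      refine ⟨⟨∑ i, c i • b i, W.sum_mem fun i _ => W.smul_mem _ (hb i)⟩, ?_⟩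
      ext j
      rw [hf]
      simp [Finsupp.finsetSum_apply, hd]
  rw [(LinearEquiv.ofBijective f hbij).finrank_eq, Module.finrank_fintype_fun_eq_card]

lemma finrank_supp {X : Type*} [DecidableEq X] (W : Submodule ℝ (X →₀ ℝ)) (S : Finset X)
    (hb : ∀ s ∈ S, Finsupp.single s 1 ∈ W) (hz : ∀ v ∈ W, ∀ s, s ∉ S → v s = 0) :
    Module.finrank ℝ W = S.card := by
  rw [finrank_of_dual W (ι := S) (fun i => Finsupp.single i.1 1) (fun i => hb _ i.2) (fun i => i.1)]
  · simp
  · intro i j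
    rw [Finsupp.single_apply]
    simp only [← Subtype.ext_iff]
  · intro v hv h
    ext s
    by_cases hs : s ∈ S
    · exact h ⟨s, hs⟩
    · exact hz v hv s hs

lemma regularBoundary_single {V : Type*} [DecidableEq V] (p : ℕ) (s : Fin (p + 2) → V) :
    regularBoundary V p (Finsupp.single s 1) = ∑ q : Fin (p + 2), ((-1 : ℝ) ^ (q : ℕ)) •
      (if ∀ k : Fin p, (s ∘ q.succAbove) k.castSucc ≠ (s ∘ q.succAbove) k.succ then
        Finsupp.single (s ∘ q.succAbove) 1 else 0) := by
  simp [regularBoundary, regularProj, pathBoundary, Finsupp.lift_apply]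

lemma single_mem_omega {V : Type*} [DecidableEq V] (R : V → V → Prop) (p : ℕ) (s : Fin (p + 2) → V)
    (hs : IsAllowedPath R s) (hf : ∀ q : Fin (p + 2), IsAllowedPath R (s ∘ q.succAbove)) :
    Finsupp.single s 1 ∈ omegaSubspace R (p + 1) := by
  refine ⟨single_mem_allowed _ _ _ hs, ?_⟩
  rw [SetLike.mem_coe, Submodule.mem_comap, regularBoundary_single]
  refine Submodule.sum_mem _ fun q _ => Submodule.smul_mem _ _ ?_
  split_ifs
  · exact single_mem_allowed _ _ _ (hf q)
  · exact Submodule.zero_mem _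

lemma dim_zero : Module.finrank ℝ (omegaSubspace dipyArrow 0) = 5 := by
  rw [finrank_supp _ (Finset.univ)]
  · simp
  · intro s _
    exact single_mem_allowed _ _ _ (fun k => k.elim0)
  · simp

lemma dim_one : Module.finrank ℝ (omegaSubspace dipyArrow 1) = 9 := by
  rw [finrank_supp _ (Finset.univ.filter fun s : Fin 2 → Fin 5 => IsAllowedPath dipyArrow s)]
  · decide
  · intro s hs
    exact single_mem_omega _ _ _ (by simpa using hs) (fun q k => k.elim0)
  · intro v hv s hs
    exact (mem_allowed_iff _ _ _).1 hv.1 s (by simpa using hs)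

lemma three_class : ∀ a b c d : Fin 5, dipyArrow a b → dipyArrow b c → dipyArrow c d →
    Killed a b c ∨ Killed b c d ∨ (a = 2 ∧ b = 0 ∧ c = 4 ∧ d = 3) ∨
      (a = 2 ∧ b = 4 ∧ c = 1 ∧ d = 3) := by decide

lemma dim_three : Module.finrank ℝ (omegaSubspace dipyArrow 3) = 2 := by
  rw [finrank_supp _ ({![2, 0, 4, 3], ![2, 4, 1, 3]} : Finset (Fin 4 → Fin 5))]
  · decide
  · intro s hs
    rw [Finset.mem_insert, Finset.mem_singleton] at hs
    rcases hs with rfl | rfl <;> exact single_mem_omega _ _ _ (by decide) (by decide)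
  · intro v hv s hs
    by_cases ha : IsAllowedPath dipyArrow s
    swap
    · exact (mem_allowed_iff _ _ _).1 hv.1 s ha
    rcases three_class _ _ _ _ (ha 0) (ha 1) (ha 2) with h | h | h | h
    · exact omega_killed 1 v hv s 0 h
    · exact omega_killed 1 v hv s 1 h
    · refine absurd ?_ hs
      rw [Finset.mem_insert]; left
      ext i; obtain ⟨h0, h1, h2, h3⟩ := h
      fin_cases i
      exacts [congrArg _ h0, congrArg _ h1, congrArg _ h2, congrArg _ h3]
    · refine absurd ?_ hs
      rw [Finset.mem_insert, Finset.mem_singleton]; right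
      ext i; obtain ⟨h0, h1, h2, h3⟩ := h
      fin_cases i
      exacts [congrArg _ h0, congrArg _ h1, congrArg _ h2, congrArg _ h3]

/-- The coordinates used on the space of invariant 2-paths. -/
def pts : Fin 6 → (Fin 3 → Fin 5) :=
  ![![0, 4, 3], ![2, 0, 4], ![2, 4, 1], ![4, 1, 3], ![2, 1, 3], ![2, 4, 3]]

/-- The basis of the space of invariant 2-paths. -/
noncomputable def bas (i : Fin 6) : elemPathSpace (Fin 5) 2 :=
  if i < 4 then Finsupp.single (pts i) 1 else Finsupp.single (pts i) 1 - Finsupp.single ![2, 0, 3] 1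

lemma two_class : ∀ s : Fin 3 → Fin 5, IsAllowedPath dipyArrow s →
    Killed (s 0) (s 1) (s 2) ∨ s = ![2, 0, 3] ∨ ∃ i, s = pts i := by decide +kernel

lemma diff_mem (s t : Fin 3 → Fin 5) (hs : IsAllowedPath dipyArrow s)
    (ht : IsAllowedPath dipyArrow t) (h : s ∘ Fin.succAbove 1 = t ∘ Fin.succAbove 1)
    (hs0 : IsAllowedPath dipyArrow (s ∘ Fin.succAbove 0))
    (hs2 : IsAllowedPath dipyArrow (s ∘ Fin.succAbove 2))
    (ht0 : IsAllowedPath dipyArrow (t ∘ Fin.succAbove 0))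
    (ht2 : IsAllowedPath dipyArrow (t ∘ Fin.succAbove 2)) :
    Finsupp.single s 1 - Finsupp.single t 1 ∈ omegaSubspace dipyArrow 2 := by
  refine ⟨Submodule.sub_mem _ (single_mem_allowed _ _ _ hs) (single_mem_allowed _ _ _ ht), ?_⟩
  rw [SetLike.mem_coe, Submodule.mem_comap, map_sub, regularBoundary_single,
    regularBoundary_single, ← Finset.sum_sub_distrib]
  have aux : ∀ (w : Fin 2 → Fin 5), IsAllowedPath dipyArrow w →
      (if ∀ k : Fin 1, w k.castSucc ≠ w k.succ then Finsupp.single w (1 : ℝ) else 0) ∈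
        allowedSubspace dipyArrow 1 := by
    intro w hw
    split_ifs
    · exact single_mem_allowed _ _ _ hw
    · exact Submodule.zero_mem _
  refine Submodule.sum_mem _ fun q _ => ?_
  rw [← smul_sub]
  refine Submodule.smul_mem _ _ ?_
  fin_cases q
  · exact Submodule.sub_mem _ (aux _ hs0) (aux _ ht0)
  · change (if ∀ k : Fin 1, (s ∘ Fin.succAbove 1) k.castSucc ≠ (s ∘ Fin.succAbove 1) k.succ then
      Finsupp.single (s ∘ Fin.succAbove 1) (1 : ℝ) else 0) -
      (if ∀ k : Fin 1, (t ∘ Fin.succAbove 1) k.castSucc ≠ (t ∘ Fin.succAbove 1) k.succ then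
      Finsupp.single (t ∘ Fin.succAbove 1) (1 : ℝ) else 0) ∈ _
    rw [h, sub_self]
    exact Submodule.zero_mem _
  · exact Submodule.sub_mem _ (aux _ hs2) (aux _ ht2)

lemma pts_ne : ∀ i, ![2, 0, 3] ≠ pts i := by decide
lemma pts_inj : ∀ i j, pts i = pts j ↔ i = j := by decide
lemma pts_allowed : ∀ i, IsAllowedPath dipyArrow (pts i) := by decide
lemma pts_small : ∀ i, i < 4 → ∀ q : Fin 3, IsAllowedPath dipyArrow (pts i ∘ q.succAbove) := by
  decide
lemma pts_big : ∀ i, ¬ i < 4 → pts i ∘ Fin.succAbove 1 = ![2, 0, 3] ∘ Fin.succAbove 1 ∧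
    IsAllowedPath dipyArrow (pts i ∘ Fin.succAbove 0) ∧
    IsAllowedPath dipyArrow (pts i ∘ Fin.succAbove 2) := by decide

lemma dim_two : Module.finrank ℝ (omegaSubspace dipyArrow 2) = 6 := by
  rw [finrank_of_dual _ bas _ pts]
  · simp
  · intro i j
    unfold bas
    split_ifs with h1 h2 h2 <;> simp [Finsupp.single_apply, pts_inj, pts_ne, h2]
  · intro v hv h
    have h1 : ∀ s, ¬ IsAllowedPath dipyArrow s → v s = 0 := (mem_allowed_iff _ _ _).1 hv.1
    ext s
    by_cases ha : IsAllowedPath dipyArrow s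
    swap
    · exact h1 s ha
    rcases two_class s ha with h' | rfl | ⟨i, rfl⟩
    · exact omega_killed 0 v hv s 0 h'
    · have key := omega_relation dipyArrow 0 v hv ![2, 3] (by decide) 0 (by decide)
      rw [Finset.sum_eq_single 0] at key
      · have e : Fin.insertNth (α := fun _ => Fin 5)
              (Fin.castSucc (Fin.succ (0 : Fin 1))) 0 ![2, 3] = ![2, 0, 3] := by decide
        exact (congrArg v e.symm).trans key
      · intro m _ hm
        by_cases ha' : IsAllowedPath dipyArrow
          (Fin.insertNth (α := fun _ => Fin 5) (Fin.castSucc (Fin.succ (0 : Fin 1))) m ![2, 3])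
        · have : ∃ i, Fin.insertNth (α := fun _ => Fin 5)
              (Fin.castSucc (Fin.succ (0 : Fin 1))) m ![2, 3] = pts i := by
            clear key
            revert m
            decide
          obtain ⟨i, hi⟩ := this
          exact (congrArg v hi).trans (h i)
        · exact h1 _ ha'
      · simp
    · exact h i
  · intro i
    unfold bas
    split_ifs with hi
    · exact single_mem_omega _ _ _ (pts_allowed i) (pts_small i hi)
    · obtain ⟨a, b, c⟩ := pts_big i hi
      exact diff_mem _ _ (pts_allowed i) (by decide) a b c (by decide) (by decide)

/-- For the directed 5-vertex dipyramid graph with the nine arrows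
`1→4, 1→5, 2→4, 3→1, 3→2, 3→5, 4→3, 5→2, 5→4`, the spaces `Ω_p` of `∂`-invariant
allowed `p`-paths satisfy `dim Ω₀ = 5`, `dim Ω₁ = 9`, `dim Ω₂ = 6`, `dim Ω₃ = 2` and
`Ω_p = 0` for `p ≥ 4`; consequently the graph Euler number is
`χ = 5 − 9 + 6 − 2 = 0`. -/
theorem dipyramid_digraph_omega_dimensions :
    Module.finrank ℝ (omegaSubspace dipyArrow 0) = 5 ∧
    Module.finrank ℝ (omegaSubspace dipyArrow 1) = 9 ∧
    Module.finrank ℝ (omegaSubspace dipyArrow 2) = 6 ∧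
    Module.finrank ℝ (omegaSubspace dipyArrow 3) = 2 ∧
    (∀ p : ℕ, 4 ≤ p → omegaSubspace dipyArrow p = ⊥) ∧
    ∑ p ∈ Finset.range 4,
      (-1 : ℤ) ^ p * (Module.finrank ℝ (omegaSubspace dipyArrow p) : ℤ) = 0 := by
  refine ⟨dim_zero, dim_one, dim_two, dim_three, ?_, ?_⟩
  · intro p hp
    obtain ⟨k, rfl⟩ := Nat.exists_eq_add_of_le' hp
    exact omega_high k
  · simp [Finset.sum_range_succ, dim_zero, dim_one, dim_two, dim_three]
end
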